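/- For all n ≥ 1, the number of nonnesting permutations of the multiset {1,1,2,2,…,n,n} that avoid both patterns 1322 and 2231 equals binom(2n,n) − 2^(n−1). -/

import Mathlib

/-- `w` is a permutation of the multiset `{1,1,2,2,…,n,n}`:
a word in which every value in `{1,…,n}` occurs exactly twice
and no other value occurs. -/
def IsMultisetPerm (n : ℕ) (w : List ℕ) : Prop :=
  ∀ i : ℕ, w.count i = if 1 ≤ i ∧ i ≤ n then 2 else 0

/-- `t` is order-isomorphic to the word `σ`:
same length, and entries compare (both `<` and `=`) in the same way. -/
def OrderIsoWord (t σ : List ℕ) : Prop :=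
  t.length = σ.length ∧
  ∀ r s : ℕ, r < σ.length → s < σ.length →
    ((t.getD r 0 < t.getD s 0 ↔ σ.getD r 0 < σ.getD s 0) ∧
     (t.getD r 0 = t.getD s 0 ↔ σ.getD r 0 = σ.getD s 0))

/-- `w` contains the pattern `σ`: some subsequence of `w`
is order-isomorphic to `σ`. -/
def Contains (w σ : List ℕ) : Prop :=
  ∃ t : List ℕ, t.Sublist w ∧ OrderIsoWord t σ

/-- `w` avoids the pattern `σ`. -/
def Avoids (w σ : List ℕ) : Prop := ¬ Contains w σ

/-- `w` is a nonnesting permutation of `{1,1,2,2,…,n,n}`: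
it avoids the patterns `1221` and `2112`. -/
def IsNonnesting (n : ℕ) (w : List ℕ) : Prop :=
  IsMultisetPerm n w ∧ Avoids w [1,2,2,1] ∧ Avoids w [2,1,1,2]


open Finset

/-- The class of words under study, with the patterns spelled out. -/
def NCls (n : ℕ) (w : List ℕ) : Prop :=
  IsMultisetPerm n w ∧
  (∀ a b, a < b → ¬ List.Sublist [a,b,b,a] w ∧ ¬ List.Sublist [b,a,a,b] w) ∧
  (∀ a b c, a < b → b < c → ¬ List.Sublist [a,c,b,b] w ∧ ¬ List.Sublist [b,b,c,a] w)

lemma len4 {t : List ℕ} (h : t.length = 4) : ∃ p q r s, t = [p,q,r,s] := by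
  match t, h with
  | [p,q,r,s], _ => exact ⟨p,q,r,s,rfl⟩

lemma contains_1221 (w : List ℕ) :
    Contains w [1,2,2,1] ↔ ∃ a b, a < b ∧ List.Sublist [a,b,b,a] w := by
  constructor
  · rintro ⟨t, ht, hl, h⟩
    obtain ⟨p,q,r,s,rfl⟩ := len4 hl
    have h1 := h 0 1 (by simp) (by simp)
    have h2 := h 1 2 (by simp) (by simp)
    have h3 := h 0 3 (by simp) (by simp)
    simp at h1 h2 h3
    obtain ⟨h1, -⟩ := h1
    obtain ⟨-, h2⟩ := h2
    obtain ⟨-, h3⟩ := h3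
    subst h2 h3
    exact ⟨_, _, h1, ht⟩
  · rintro ⟨a, b, hab, h⟩
    refine ⟨_, h, rfl, ?_⟩
    intro r s hr hs
    simp at hr hs
    interval_cases r <;> interval_cases s <;> simp <;> omega

lemma contains_2112 (w : List ℕ) :
    Contains w [2,1,1,2] ↔ ∃ a b, a < b ∧ List.Sublist [b,a,a,b] w := by
  constructor
  · rintro ⟨t, ht, hl, h⟩
    obtain ⟨p,q,r,s,rfl⟩ := len4 hl
    have h1 := h 1 0 (by simp) (by simp)
    have h2 := h 1 2 (by simp) (by simp)
    have h3 := h 0 3 (by simp) (by simp)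
    simp at h1 h2 h3
    obtain ⟨h1, -⟩ := h1
    obtain ⟨-, h2⟩ := h2
    obtain ⟨-, h3⟩ := h3
    subst h2 h3
    exact ⟨_, _, h1, ht⟩
  · rintro ⟨a, b, hab, h⟩
    refine ⟨_, h, rfl, ?_⟩
    intro r s hr hs
    simp at hr hs
    interval_cases r <;> interval_cases s <;> simp <;> omega

lemma contains_1322 (w : List ℕ) :
    Contains w [1,3,2,2] ↔ ∃ a b c, a < b ∧ b < c ∧ List.Sublist [a,c,b,b] w := by
  constructor
  · rintro ⟨t, ht, hl, h⟩
    obtain ⟨p,q,r,s,rfl⟩ := len4 hl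
    have h1 := h 0 2 (by simp) (by simp)
    have h2 := h 2 3 (by simp) (by simp)
    have h3 := h 2 1 (by simp) (by simp)
    simp at h1 h2 h3
    obtain ⟨h1, -⟩ := h1
    obtain ⟨h3, -⟩ := h3
    obtain ⟨-, h2⟩ := h2
    subst h2
    exact ⟨_, _, _, h1, h3, ht⟩
  · rintro ⟨a, b, c, hab, hbc, h⟩
    refine ⟨_, h, rfl, ?_⟩
    intro r s hr hs
    simp at hr hs
    interval_cases r <;> interval_cases s <;> simp <;> omega

lemma contains_2231 (w : List ℕ) :
    Contains w [2,2,3,1] ↔ ∃ a b c, a < b ∧ b < c ∧ List.Sublist [b,b,c,a] w := by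
  constructor
  · rintro ⟨t, ht, hl, h⟩
    obtain ⟨p,q,r,s,rfl⟩ := len4 hl
    have h1 := h 3 0 (by simp) (by simp)
    have h2 := h 0 1 (by simp) (by simp)
    have h3 := h 0 2 (by simp) (by simp)
    simp at h1 h2 h3
    obtain ⟨h1, -⟩ := h1
    obtain ⟨h3, -⟩ := h3
    obtain ⟨-, h2⟩ := h2
    subst h2
    exact ⟨_, _, _, h1, h3, ht⟩
  · rintro ⟨a, b, c, hab, hbc, h⟩
    refine ⟨_, h, rfl, ?_⟩
    intro r s hr hs
    simp at hr hs
    interval_cases r <;> interval_cases s <;> simp <;> omega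

lemma ncls_iff (n : ℕ) (w : List ℕ) :
    (IsNonnesting n w ∧ Avoids w [1,3,2,2] ∧ Avoids w [2,2,3,1]) ↔ NCls n w := by
  unfold IsNonnesting Avoids NCls
  rw [contains_1221, contains_2112, contains_1322, contains_2231]
  push Not
  constructor
  · rintro ⟨⟨h0, h1, h2⟩, h3, h4⟩
    exact ⟨h0, fun a b h => ⟨h1 a b h, h2 a b h⟩, fun a b c h h' => ⟨h3 a b c h h', h4 a b c h h'⟩⟩
  · rintro ⟨h0, h1, h2⟩
    exact ⟨⟨h0, fun a b h => (h1 a b h).1, fun a b h => (h1 a b h).2⟩,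
      fun a b c h h' => (h2 a b c h h').1, fun a b c h h' => (h2 a b c h h').2⟩

lemma NCls.rev {n : ℕ} {w : List ℕ} (h : NCls n w) : NCls n w.reverse := by
  obtain ⟨h0, h1, h2⟩ := h
  refine ⟨fun i => by rw [List.count_reverse]; exact h0 i, fun a b hab => ?_, fun a b c hab hbc => ?_⟩
  · have := h1 a b hab
    rw [← List.reverse_sublist, ← List.reverse_sublist (l₁ := [b,a,a,b])]
    simpa using this
  · have := h2 a b c hab hbc
    rw [← List.reverse_sublist, ← List.reverse_sublist (l₁ := [b,b,c,a])]
    simpa using this.symm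

lemma perm_mem {n : ℕ} {w : List ℕ} (h : IsMultisetPerm n w) (a : ℕ) :
    a ∈ w ↔ 1 ≤ a ∧ a ≤ n := by
  rw [← List.count_pos_iff, h a]
  split_ifs with h1 <;> simp [h1]

/-- A set of letters that can be enclosed between the two copies of the new maximum. -/
def GoodPre (n : ℕ) (y : List ℕ) : Prop :=
  y.Nodup ∧ ∀ a ∈ y, ∀ b, 1 ≤ b → b ≤ n → b ∉ y → b < a

/-- Left child of a word. -/
def lch (M : ℕ) (w : List ℕ) (j : ℕ) : List ℕ := M :: (w.take j ++ M :: w.drop j)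

open Classical in
/-- Admissible insertion positions. -/
noncomputable def GLp (n : ℕ) (w : List ℕ) : Finset ℕ :=
  (Finset.range (w.length + 1)).filter (fun j => GoodPre n (w.take j))

lemma mem_GLp {n : ℕ} {w : List ℕ} {j : ℕ} :
    j ∈ GLp n w ↔ j ≤ w.length ∧ GoodPre n (w.take j) := by
  simp [GLp]

lemma sub_split {M : ℕ} {l1 l2 y z : List ℕ} (hy : M ∉ y) (hz : M ∉ z)
    (h : List.Sublist (l1 ++ M :: l2) (y ++ M :: z)) : l1.Sublist y ∧ l2.Sublist z := by
  induction y generalizing l1 with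
  | nil =>
    cases l1 with
    | nil => simpa using h
    | cons a l =>
      exfalso
      simp only [List.nil_append, List.cons_append] at h
      have := h.of_cons_cons
      exact hz (this.subset (by simp))
  | cons b y ih =>
    simp only [List.mem_cons, not_or] at hy
    cases l1 with
    | nil =>
      simp only [List.nil_append, List.cons_append] at h
      rcases List.sublist_cons_iff.1 h with h | ⟨r, hr, h⟩
      · have := ih (l1 := []) hy.2 h
        exact ⟨by simp, this.2⟩
      · simp at hr; exact absurd hr.1 hy.1
    | cons a l =>
      simp only [List.cons_append] at h
      rcases List.sublist_cons_iff.1 h with h | ⟨r, hr, h⟩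
      · have := ih (l1 := a :: l) hy.2 (by simpa using h)
        exact ⟨this.1.cons _, this.2⟩
      · simp at hr
        obtain ⟨rfl, rfl⟩ := hr
        have := ih hy.2 h
        exact ⟨this.1.cons_cons _, this.2⟩

lemma count_lch (M : ℕ) (w : List ℕ) (j i : ℕ) :
    (lch M w j).count i = w.count i + if M = i then 2 else 0 := by
  have : w.count i = (w.take j).count i + (w.drop j).count i := by
    rw [← List.count_append, List.take_append_drop]
  rw [this]
  simp only [lch, List.count_cons, List.count_append, beq_iff_eq]
  split_ifs <;> omega

lemma perm_lch {n : ℕ} {w : List ℕ} (h : IsMultisetPerm n w) (j : ℕ) :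
    IsMultisetPerm (n+1) (lch (n+1) w j) := by
  intro i
  rw [count_lch, h i]
  split_ifs <;> omega

lemma filter_lch {M : ℕ} {w : List ℕ} (hM : M ∉ w) (j : ℕ) :
    (lch M w j).filter (· ≠ M) = w := by
  have h : ∀ l : List ℕ, M ∉ l → l.filter (· ≠ M) = l := by
    intro l hl
    rw [List.filter_eq_self]
    intro a ha
    simp
    rintro rfl; exact hl ha
  have h1 : M ∉ w.take j := fun h => hM (List.mem_of_mem_take h)
  have h2 : M ∉ w.drop j := fun h => hM (List.mem_of_mem_drop h)
  have e1 := h _ h1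
  have e2 := h _ h2
  unfold lch
  rw [List.filter_cons_of_neg (by simp), List.filter_append, List.filter_cons_of_neg (by simp),
    e1, e2, List.take_append_drop]

lemma count_split (w : List ℕ) (j i : ℕ) :
    w.count i = (w.take j).count i + (w.drop j).count i := by
  rw [← List.count_append, List.take_append_drop]

lemma two_sub {b : ℕ} {l : List ℕ} : List.Sublist [b,b] l ↔ 2 ≤ l.count b :=
  List.replicate_sublist_iff (n := 2)

lemma nodup_iff_count {l : List ℕ} : l.Nodup ↔ ∀ a, l.count a ≤ 1 := List.nodup_iff_count_le_one

lemma ncls_lch {n : ℕ} {w : List ℕ} (h : NCls n w) {j : ℕ} (hj : j ∈ GLp n w) :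
    NCls (n+1) (lch (n+1) w j) := by
  obtain ⟨h0, h1, h2⟩ := h
  have hp := perm_lch h0 j
  have hM : n + 1 ∉ w := by rw [perm_mem h0]; omega
  have hy : n+1 ∉ w.take j := fun h => hM (List.mem_of_mem_take h)
  have hz : n+1 ∉ w.drop j := fun h => hM (List.mem_of_mem_drop h)
  obtain ⟨hjl, hnd, hg⟩ := mem_GLp.1 hj
  have hmem : ∀ a ∈ lch (n+1) w j, a ≤ n + 1 := fun a ha => ((perm_mem hp a).1 ha).2
  have hfil : ∀ l : List ℕ, l.Sublist (lch (n+1) w j) → (∀ a ∈ l, a ≠ n+1) → l.Sublist w := by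
    intro l hl hne
    have := hl.filter (fun a => decide (a ≠ n+1))
    rw [filter_lch hM] at this
    rwa [List.filter_eq_self.2 (by simpa using hne)] at this
  have hdrop : ∀ (a : ℕ) (l : List ℕ), a ≠ n+1 → (a :: l).Sublist (lch (n+1) w j) →
      (a :: l).Sublist (w.take j ++ (n+1) :: w.drop j) := by
    intro a l ha hl
    unfold lch at hl
    rcases List.sublist_cons_iff.1 hl with h | ⟨r, hr, h⟩
    · exact h
    · simp at hr; exact absurd hr.1 ha
  have hnd2 : ∀ b, ¬ List.Sublist [b,b] (w.take j) := by
    intro b hb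
    have := two_sub.1 hb
    have := nodup_iff_count.1 hnd b
    omega
  refine ⟨hp, fun a b hab => ⟨fun hs => ?_, fun hs => ?_⟩,
    fun a b c hab hbc => ⟨fun hs => ?_, fun hs => ?_⟩⟩
  · have hb := hmem b (hs.subset (by simp))
    by_cases hbM : b = n+1
    · subst hbM
      have := (sub_split (l1 := [a]) (l2 := [n+1,a]) hy hz (hdrop _ _ (by omega) hs)).2
      exact hz (this.subset (by simp))
    · exact (h1 a b hab).1 (hfil _ hs (by simp; omega))
  · have hb := hmem b (hs.subset (by simp))
    by_cases hbM : b = n+1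
    · subst hbM
      unfold lch at hs
      have hs := hs.of_cons_cons
      exact hnd2 a (sub_split (l1 := [a,a]) (l2 := []) hy hz hs).1
    · exact (h1 a b hab).2 (hfil _ hs (by simp; omega))
  · have hb := hmem c (hs.subset (by simp))
    by_cases hbM : c = n+1
    · subst hbM
      obtain ⟨h3, h4⟩ := sub_split (l1 := [a]) (l2 := [b,b]) hy hz (hdrop _ _ (by omega) hs)
      have hay : a ∈ w.take j := h3.subset (by simp)
      have hbz := two_sub.1 h4
      have hbw : b ∈ w := List.mem_of_mem_drop (h4.subset (show b ∈ [b,b] by simp))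
      have hb1 := (perm_mem h0 b).1 hbw
      have hc := h0 b
      rw [if_pos hb1, count_split w j] at hc
      have hby : b ∉ w.take j := by
        rw [← List.count_pos_iff]; omega
      have := hg a hay b hb1.1 hb1.2 hby
      omega
    · exact (h2 a b c hab hbc).1 (hfil _ hs (by simp; omega))
  · have hb := hmem c (hs.subset (by simp))
    by_cases hbM : c = n+1
    · subst hbM
      exact hnd2 b (sub_split (l1 := [b,b]) (l2 := [a]) hy hz (hdrop _ _ (by omega) hs)).1
    · exact (h2 a b c hab hbc).2 (hfil _ hs (by simp; omega))

lemma two_split {M : ℕ} {v : List ℕ} (h : v.count M = 2) :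
    ∃ x y z, v = x ++ M :: (y ++ M :: z) ∧ M ∉ x ∧ M ∉ y ∧ M ∉ z := by
  have h1 : M ∈ v := by rw [← List.count_pos_iff]; omega
  obtain ⟨x, t, rfl, hx⟩ := List.eq_append_cons_of_mem h1
  have hx0 : x.count M = 0 := List.count_eq_zero.2 hx
  simp only [List.count_append, List.count_cons, beq_self_eq_true, if_true] at h
  have h2 : M ∈ t := by rw [← List.count_pos_iff]; omega
  obtain ⟨y, z, rfl, hy⟩ := List.eq_append_cons_of_mem h2
  have hy0 : y.count M = 0 := List.count_eq_zero.2 hy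
  simp only [List.count_append, List.count_cons, beq_self_eq_true, if_true] at h
  exact ⟨x, y, z, rfl, hx, hy, List.count_eq_zero.1 (by omega)⟩

lemma lch_append (M : ℕ) (y z : List ℕ) : lch M (y ++ z) y.length = M :: (y ++ M :: z) := by
  simp [lch]

lemma ncls_left {n : ℕ} {y z : List ℕ} (hy : n+1 ∉ y) (hz : n+1 ∉ z)
    (h : NCls (n+1) ((n+1) :: (y ++ (n+1) :: z))) :
    NCls n (y ++ z) ∧ y.length ∈ GLp n (y ++ z) := by
  obtain ⟨h0, h1, h2⟩ := h
  have hsub : (y ++ z).Sublist ((n+1) :: (y ++ (n+1) :: z)) :=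
    (List.Sublist.append (List.Sublist.refl y) (List.sublist_cons_self _ z)).cons _
  have hp : IsMultisetPerm n (y ++ z) := by
    intro i
    have := h0 i
    by_cases hi : i = n+1
    · subst hi
      rw [List.count_eq_zero.2 (by simp [hy, hz])]; simp
    · have hi' : ¬ (n + 1 = i) := fun h => hi h.symm
      simp only [List.count_cons, List.count_append, beq_iff_eq, if_neg hi'] at this ⊢
      rw [show List.count i y + List.count i z = List.count i y + (List.count i z + 0) + 0 by omega,
        this]
      split_ifs <;> omega
  refine ⟨⟨hp, fun a b hab => ?_, fun a b c hab hbc => ?_⟩, ?_⟩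
  · exact ⟨fun h => (h1 a b hab).1 (h.trans hsub), fun h => (h1 a b hab).2 (h.trans hsub)⟩
  · exact ⟨fun h => (h2 a b c hab hbc).1 (h.trans hsub), fun h => (h2 a b c hab hbc).2 (h.trans hsub)⟩
  · rw [mem_GLp]
    refine ⟨by simp, ?_⟩
    rw [List.take_left]
    refine ⟨?_, ?_⟩
    · rw [nodup_iff_count]
      intro a
      by_contra hc
      have hs : List.Sublist [a,a] y := two_sub.2 (by omega)
      have ha : a ∈ y ++ z := by
        have := hs.subset (show a ∈ [a,a] by simp)
        simp [this]
      have := (perm_mem hp a).1 ha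
      refine (h1 a (n+1) (by omega)).2 ?_
      have h3 : List.Sublist ([a,a] ++ [n+1]) (y ++ (n+1) :: z) := hs.append (by simp)
      exact h3.cons_cons _
    · intro a ha b hb1 hb2 hb
      by_contra hc
      have hne : a ≠ b := by rintro rfl; exact hb ha
      have hcount := hp b
      rw [if_pos ⟨hb1, hb2⟩, List.count_append, List.count_eq_zero.2 hb] at hcount
      have hs : List.Sublist [b,b] z := two_sub.2 (by omega)
      refine (h2 a b (n+1) (by omega) (by omega)).1 ?_
      have h3 : List.Sublist ([a] ++ ((n+1) :: [b,b])) (y ++ (n+1) :: z) :=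
        (List.singleton_sublist.2 ha).append (hs.cons_cons _)
      exact h3.cons _

lemma ncls_ends {n : ℕ} {x y z : List ℕ} (hx : n+1 ∉ x) (hz : n+1 ∉ z)
    (h : NCls (n+1) (x ++ (n+1) :: (y ++ (n+1) :: z))) : x = [] ∨ z = [] := by
  obtain ⟨h0, h1, h2⟩ := h
  by_contra hc
  push Not at hc
  obtain ⟨a, ha⟩ := List.exists_mem_of_ne_nil _ hc.1
  obtain ⟨b, hb⟩ := List.exists_mem_of_ne_nil _ hc.2
  have ha1 := (perm_mem h0 a).1 (by simp [ha])
  have hb1 := (perm_mem h0 b).1 (by simp [hb])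
  have ha2 : a ≠ n+1 := by rintro rfl; exact hx ha
  have hb2 : b ≠ n+1 := by rintro rfl; exact hz hb
  have key : ∀ c, c ∈ x → c ∈ z → c < n+1 → False := by
    intro c hcx hcz hcn
    refine (h1 c (n+1) hcn).1 ?_
    have h3 : List.Sublist ([c] ++ ((n+1) :: ([] ++ ((n+1) :: [c])))) (x ++ (n+1) :: (y ++ (n+1) :: z)) :=
      (List.singleton_sublist.2 hcx).append
        (((List.nil_sublist y).append ((List.singleton_sublist.2 hcz).cons_cons _)).cons_cons _)
    exact h3
  rcases lt_trichotomy a b with hab | rfl | hab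
  · have hbx : b ∉ x := fun h => key b h hb (by omega)
    have hcount := h0 b
    rw [if_pos hb1] at hcount
    simp only [List.count_append, List.count_cons, beq_iff_eq, List.count_eq_zero.2 hbx,
      if_neg hb2.symm] at hcount
    have hs : List.Sublist [b,b] (y ++ (n+1) :: z) := two_sub.2 (by
      simp only [List.count_append, List.count_cons, beq_iff_eq, if_neg hb2.symm]; omega)
    refine (h2 a b (n+1) hab (by omega)).1 ?_
    exact (List.singleton_sublist.2 ha).append (hs.cons_cons _)
  · exact key a ha hb (by omega)
  · have haz : a ∉ z := fun h => key a ha h (by omega)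
    have hcount := h0 a
    rw [if_pos ha1] at hcount
    simp only [List.count_append, List.count_cons, beq_iff_eq, List.count_eq_zero.2 haz,
      if_neg ha2.symm] at hcount
    have hs : List.Sublist [a,a] (x ++ (n+1) :: y) := two_sub.2 (by
      simp only [List.count_append, List.count_cons, beq_iff_eq, if_neg ha2.symm]; omega)
    refine (h2 b a (n+1) hab (by omega)).2 ?_
    have h3 : List.Sublist ([a,a] ++ ((n+1) :: [b])) ((x ++ (n+1) :: y) ++ ((n+1) :: z)) :=
      hs.append ((List.singleton_sublist.2 hb).cons_cons _)
    simpa using h3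

lemma ncls_parent {n : ℕ} {v : List ℕ} (h : NCls (n+1) v) :
    ∃ w, NCls n w ∧ ((∃ j ∈ GLp n w, v = lch (n+1) w j) ∨
      ∃ j ∈ GLp n w.reverse, v = (lch (n+1) w.reverse j).reverse) := by
  have hc := h.1 (n+1)
  rw [if_pos (by omega)] at hc
  obtain ⟨x, y, z, rfl, hx, hy, hz⟩ := two_split hc
  rcases ncls_ends hx hz h with rfl | rfl
  · obtain ⟨h3, h4⟩ := ncls_left hy hz h
    exact ⟨_, h3, Or.inl ⟨_, h4, by rw [lch_append]; rfl⟩⟩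
  · have hr := h.rev
    have he : (x ++ (n+1) :: (y ++ [n+1])).reverse = (n+1) :: (y.reverse ++ (n+1) :: x.reverse) := by
      simp
    rw [he] at hr
    obtain ⟨h3, h4⟩ := ncls_left (by simpa using hy) (by simpa using hx) hr
    refine ⟨_, h3.rev, Or.inr ⟨y.reverse.length, ?_, ?_⟩⟩
    · rw [List.reverse_reverse]; exact h4
    · rw [List.reverse_reverse, lch_append]; simp

/-- All children of a word. -/
noncomputable def chil (n : ℕ) (w : List ℕ) : Finset (List ℕ) :=
  (GLp n w).image (lch (n+1) w) ∪ (GLp n w.reverse).image (fun j => (lch (n+1) w.reverse j).reverse)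

/-- Levels of the generating tree. -/
noncomputable def lev : ℕ → Finset (List ℕ)
  | 0 => {[1,1]}
  | m+1 => (lev m).biUnion (chil (m+1))

lemma ncls_chil {n : ℕ} {w v : List ℕ} (h : NCls n w) (hv : v ∈ chil n w) : NCls (n+1) v := by
  simp only [chil, mem_union, mem_image] at hv
  rcases hv with ⟨j, hj, rfl⟩ | ⟨j, hj, rfl⟩
  · exact ncls_lch h hj
  · exact (ncls_lch h.rev hj).rev

lemma ncls_one (w : List ℕ) : NCls 1 w ↔ w = [1,1] := by
  constructor
  · intro h
    have h1 : ∀ b ∈ w, b = 1 := fun b hb => by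
      have := (perm_mem h.1 b).1 hb; omega
    have h2 := List.eq_replicate_of_mem h1
    have h3 := h.1 1
    rw [h2] at h3
    simp at h3
    rw [h2, h3]; rfl
  · rintro rfl
    refine ⟨?_, ?_, ?_⟩
    · intro i
      simp only [List.count_cons, beq_iff_eq, List.count_nil]
      split_ifs <;> omega
    · intro a b hab
      exact ⟨fun h => by simpa using h.length_le, fun h => by simpa using h.length_le⟩
    · intro a b c hab hbc
      exact ⟨fun h => by simpa using h.length_le, fun h => by simpa using h.length_le⟩

lemma mem_lev (m : ℕ) (w : List ℕ) : w ∈ lev m ↔ NCls (m+1) w := by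
  induction m generalizing w with
  | zero => simp [lev, ncls_one]
  | succ m ih =>
    simp only [lev, mem_biUnion]
    constructor
    · rintro ⟨u, hu, hw⟩
      exact ncls_chil ((ih u).1 hu) hw
    · intro h
      obtain ⟨u, hu, hw⟩ := ncls_parent h
      refine ⟨u, (ih u).2 hu, ?_⟩
      simp only [chil, mem_union, mem_image]
      rcases hw with ⟨j, hj, rfl⟩ | ⟨j, hj, rfl⟩
      · exact Or.inl ⟨j, hj, rfl⟩
      · exact Or.inr ⟨j, hj, rfl⟩

lemma filter_chil {n : ℕ} {w v : List ℕ} (h : IsMultisetPerm n w) (hv : v ∈ chil n w) :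
    v.filter (· ≠ n+1) = w := by
  have hM : n + 1 ∉ w := by rw [perm_mem h]; omega
  simp only [chil, mem_union, mem_image] at hv
  rcases hv with ⟨j, hj, rfl⟩ | ⟨j, hj, rfl⟩
  · exact filter_lch hM j
  · rw [List.filter_reverse, filter_lch (by simpa using hM), List.reverse_reverse]

lemma sum_lev_succ (m : ℕ) (F : List ℕ → ℤ) :
    ∑ v ∈ lev (m+1), F v = ∑ w ∈ lev m, ∑ v ∈ chil (m+1) w, F v := by
  simp only [lev]
  rw [sum_biUnion]
  intro w hw w' hw' hne
  rw [Function.onFun, Finset.disjoint_left]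
  intro v hv hv'
  apply hne
  rw [← filter_chil ((mem_lev m w).1 hw).1 hv, filter_chil ((mem_lev m w').1 hw').1 hv']

lemma lch_inj {n : ℕ} {w : List ℕ} (h : IsMultisetPerm n w) :
    Set.InjOn (lch (n+1) w) (GLp n w : Set ℕ) := by
  intro i hi j hj hij
  have hM : n + 1 ∉ w := by rw [perm_mem h]; omega
  have hi' := (mem_GLp.1 hi).1
  have hj' := (mem_GLp.1 hj).1
  by_contra hne
  have key : ∀ i j, i ≤ w.length → j ≤ w.length → lch (n+1) w i = lch (n+1) w j → i < j → False := by
    intro i j hi hj hij hlt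
    have h1 := congrArg (fun l => l[i+1]?) hij
    simp only [lch, List.getElem?_cons_succ] at h1
    rw [List.getElem?_append_right (by simp), List.getElem?_append_left (by simp; omega)] at h1
    have h3 : i - (List.take i w).length = 0 := by simp; omega
    rw [h3] at h1
    simp only [List.getElem?_cons_zero] at h1
    exact hM (List.mem_of_mem_take (List.mem_of_getElem? h1.symm))
  rcases Nat.lt_or_gt_of_ne hne with h1 | h1
  · exact key i j hi' hj' hij h1
  · exact key j i hj' hi' hij.symm h1

lemma perm_rev {n : ℕ} {w : List ℕ} (h : IsMultisetPerm n w) : IsMultisetPerm n w.reverse :=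
  fun i => by rw [List.count_reverse]; exact h i

lemma sum_chil {n : ℕ} (hn : 1 ≤ n) {w : List ℕ} (h : IsMultisetPerm n w) (F : List ℕ → ℤ) :
    ∑ v ∈ chil n w, F v = ∑ j ∈ GLp n w, F (lch (n+1) w j)
      + ∑ j ∈ GLp n w.reverse, F (lch (n+1) w.reverse j).reverse := by
  unfold chil
  rw [sum_union, sum_image (lch_inj h), sum_image]
  · intro i hi j hj hij
    exact lch_inj (perm_rev h) hi hj (List.reverse_injective hij)
  · rw [Finset.disjoint_left]
    intro v hv hv'
    simp only [mem_image] at hv hv'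
    obtain ⟨i, hi, rfl⟩ := hv
    obtain ⟨j, hj, hij⟩ := hv'
    have hM : n + 1 ∉ w := by rw [perm_mem h]; omega
    have hd : w.drop i ≠ [] := by
      intro hd
      have h1 := nodup_iff_count.1 (mem_GLp.1 hi).2.1 1
      have h2 := count_split w i 1
      rw [hd, h 1, if_pos (by omega)] at h2
      simp at h2
      omega
    have h1 := congrArg List.getLast? hij
    rw [List.getLast?_reverse] at h1
    simp only [lch, List.head?_cons] at h1
    have h2 : ((n+1) :: (w.take i ++ (n+1) :: w.drop i)).getLast? = (w.drop i).getLast? := by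
      rw [show (n+1) :: (w.take i ++ (n+1) :: w.drop i) = ((n+1) :: w.take i ++ [n+1]) ++ w.drop i by simp,
        List.getLast?_append_of_ne_nil _ hd]
    rw [h2] at h1
    exact hM (List.mem_of_mem_drop (List.mem_of_getLast? h1.symm))

/-- A word is special if it splits into two words without repetition. -/
def Spc (w : List ℕ) : Prop := ∃ j ≤ w.length, (w.take j).Nodup ∧ (w.drop j).Nodup

lemma spc_rev' {w : List ℕ} (h : Spc w) : Spc w.reverse := by
  obtain ⟨j, hj, h1, h2⟩ := h
  refine ⟨w.length - j, by simp, ?_, ?_⟩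
  · rw [List.take_reverse, List.nodup_reverse]
    rwa [show w.length - (w.length - j) = j by omega]
  · rw [List.drop_reverse, List.nodup_reverse]
    rwa [show w.length - (w.length - j) = j by omega]

lemma spc_rev {w : List ℕ} : Spc w.reverse ↔ Spc w :=
  ⟨fun h => by simpa using spc_rev' h, spc_rev'⟩

lemma good_nil (n : ℕ) : GoodPre n [] := by simp [GoodPre]

lemma good_cons {n : ℕ} {y : List ℕ} (hy : n + 1 ∉ y) :
    GoodPre (n+1) ((n+1) :: y) ↔ GoodPre n y := by
  unfold GoodPre
  rw [List.nodup_cons]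
  constructor
  · rintro ⟨⟨-, h1⟩, h2⟩
    refine ⟨h1, fun a ha b hb1 hb2 hb => h2 a (by simp [ha]) b hb1 (by omega) ?_⟩
    simp only [List.mem_cons, not_or]
    exact ⟨by omega, hb⟩
  · rintro ⟨h1, h2⟩
    refine ⟨⟨hy, h1⟩, fun a ha b hb1 hb2 hb => ?_⟩
    simp only [List.mem_cons, not_or] at ha hb
    rcases ha with rfl | ha
    · omega
    · exact h2 a ha b hb1 (by omega) hb.2

lemma card_left {n : ℕ} {w : List ℕ} (h : IsMultisetPerm n w) {j : ℕ} (hj : j ∈ GLp n w) :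
    (GLp (n+1) (lch (n+1) w j)).card = ((GLp n w).filter (· ≤ j)).card + 1 := by
  have hM : n + 1 ∉ w := by rw [perm_mem h]; omega
  have hjl := (mem_GLp.1 hj).1
  have he : GLp (n+1) (lch (n+1) w j)
      = insert 0 (((GLp n w).filter (· ≤ j)).image Nat.succ) := by
    ext i
    rw [mem_GLp, mem_insert, mem_image]
    rcases i with _ | i
    · simp [good_nil]
    · have ht : (lch (n+1) w j).take (i+1) = (n+1) :: (w.take j ++ (n+1) :: w.drop j).take i := rfl
      rw [ht]
      have hlen : (lch (n+1) w j).length = w.length + 2 := by simp [lch]; omega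
      constructor
      · rintro ⟨h1, h2⟩
        right
        have hij : i ≤ j := by
          by_contra hc
          have h3 := (List.nodup_cons.1 h2.1).1
          apply h3
          rw [List.take_append, List.mem_append]
          right
          rw [List.length_take, min_eq_left hjl]
          obtain ⟨d, hd⟩ : ∃ d, i - j = d + 1 := ⟨i - j - 1, by omega⟩
          rw [hd]; simp
        have h4 : (w.take j ++ (n+1) :: w.drop j).take i = w.take i := by
          rw [List.take_append_of_le_length (by simp; omega), List.take_take, min_eq_left hij]
        rw [h4, good_cons (fun h => hM (List.mem_of_mem_take h))] at h2
        exact ⟨i, by rw [mem_filter, mem_GLp]; exact ⟨⟨by omega, h2⟩, hij⟩, rfl⟩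
      · rintro (h1 | ⟨i', h1, h2⟩)
        · omega
        · obtain rfl : i' = i := by simpa using h2
          rw [mem_filter, mem_GLp] at h1
          obtain ⟨⟨h3, h5⟩, hij⟩ := h1
          have h4 : (w.take j ++ (n+1) :: w.drop j).take i' = w.take i' := by
            rw [List.take_append_of_le_length (by simp; omega), List.take_take, min_eq_left hij]
          rw [h4, good_cons (fun h => hM (List.mem_of_mem_take h))]
          exact ⟨by omega, h5⟩
  rw [he, card_insert_of_notMem (by simp), card_image_of_injective _ Nat.succ_injective]

lemma mem_drop_of {n : ℕ} {w : List ℕ} (h : IsMultisetPerm n w) {j : ℕ}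
    (hy : (w.take j).Nodup) {b : ℕ} (hb1 : 1 ≤ b) (hb2 : b ≤ n) : b ∈ w.drop j := by
  have h1 := count_split w j b
  rw [h b, if_pos ⟨hb1, hb2⟩] at h1
  have := nodup_iff_count.1 hy b
  rw [← List.count_pos_iff]; omega

lemma mem_take_of {n : ℕ} {w : List ℕ} (h : IsMultisetPerm n w) {j : ℕ}
    (hy : (w.drop j).Nodup) {b : ℕ} (hb1 : 1 ≤ b) (hb2 : b ≤ n) : b ∈ w.take j := by
  have h1 := count_split w j b
  rw [h b, if_pos ⟨hb1, hb2⟩] at h1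
  have := nodup_iff_count.1 hy b
  rw [← List.count_pos_iff]; omega

lemma rev_lch (M : ℕ) (w : List ℕ) (j : ℕ) :
    (lch M w j).reverse = (w.drop j).reverse ++ M :: ((w.take j).reverse ++ [M]) := by
  simp [lch]

open Classical in
lemma card_right {n : ℕ} {w : List ℕ} (h : IsMultisetPerm n w) {j : ℕ} (hj : j ∈ GLp n w) :
    (GLp (n+1) (lch (n+1) w j).reverse).card = if (w.drop j).Nodup then 2 else 1 := by
  have hM : n + 1 ∉ w := by rw [perm_mem h]; omega
  have hy : n+1 ∉ w.take j := fun h => hM (List.mem_of_mem_take h)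
  have hz : n+1 ∉ w.drop j := fun h => hM (List.mem_of_mem_drop h)
  obtain ⟨hjl, hnd, hg⟩ := mem_GLp.1 hj
  rw [rev_lch]
  set y := w.take j with hyd
  set z := w.drop j with hzd
  have h0 : 0 ∈ GLp (n+1) (z.reverse ++ (n+1) :: (y.reverse ++ [n+1])) := by
    rw [mem_GLp]; simp [good_nil]
  have key : ∀ i, i ∈ GLp (n+1) (z.reverse ++ (n+1) :: (y.reverse ++ [n+1])) → i ≠ 0 →
      z.Nodup ∧ i = z.length + 1 := by
    intro i hi hi0
    obtain ⟨h1, h2, h3⟩ := mem_GLp.1 hi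
    have hiz : z.length < i := by
      by_contra hc
      rw [List.take_append_of_le_length (by simp; omega)] at h2 h3
      have hne : z.reverse.take i ≠ [] := by
        intro he
        have := congrArg List.length he
        rw [List.length_take, List.length_reverse, List.length_nil] at this
        omega
      obtain ⟨a, ha⟩ := List.exists_mem_of_ne_nil _ hne
      have haz : a ∈ z := by simpa using List.mem_of_mem_take ha
      have haw := (perm_mem h a).1 (List.mem_of_mem_drop haz)
      have := h3 a ha (n+1) (by omega) le_rfl (fun hh => hz (by simpa using List.mem_of_mem_take hh))
      omega
    obtain ⟨d, rfl⟩ : ∃ d, i = z.length + (d+1) := ⟨i - z.length - 1, by omega⟩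
    have ht : (z.reverse ++ (n+1) :: (y.reverse ++ [n+1])).take (z.length + (d+1))
        = z.reverse ++ (n+1) :: (y.reverse ++ [n+1]).take d := by
      rw [show z.length = z.reverse.length by simp, List.take_length_add_append]; rfl
    rw [ht, List.nodup_append] at h2
    obtain ⟨h4, h5, h6⟩ := h2
    refine ⟨by simpa using h4, ?_⟩
    by_contra hd
    have hd0 : d ≠ 0 := by rintro rfl; simp at hd
    have hne : (y.reverse ++ [n+1]).take d ≠ [] := by
      intro he
      have := congrArg List.length he
      simp at this
      omega
    obtain ⟨a, ha⟩ := List.exists_mem_of_ne_nil _ hne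
    have ha' := List.mem_of_mem_take ha
    simp only [List.mem_append, List.mem_reverse, List.mem_singleton] at ha'
    rcases ha' with ha' | rfl
    · have haw := (perm_mem h a).1 (List.mem_of_mem_take ha')
      have haz := mem_drop_of h hnd haw.1 haw.2
      exact h6 a (by simpa using haz) a (by simp [ha]) rfl
    · exact (List.nodup_cons.1 h5).1 ha
  split_ifs with hzn
  · have : GLp (n+1) (z.reverse ++ (n+1) :: (y.reverse ++ [n+1])) = {0, z.length + 1} := by
      ext i
      rw [mem_insert, mem_singleton]
      constructor
      · intro hi
        by_cases hi0 : i = 0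
        · exact Or.inl hi0
        · exact Or.inr (key i hi hi0).2
      · rintro (rfl | rfl)
        · exact h0
        · rw [mem_GLp]
          refine ⟨by simp, ?_⟩
          have ht : (z.reverse ++ (n+1) :: (y.reverse ++ [n+1])).take (z.length + 1)
              = z.reverse ++ [n+1] := by
            rw [show z.length = z.reverse.length by simp, List.take_length_add_append]; rfl
          rw [ht]
          refine ⟨?_, ?_⟩
          · rw [List.nodup_append]
            refine ⟨by simpa using hzn, by simp, ?_⟩
            intro a ha b hb
            simp at ha hb
            rintro rfl
            subst hb; exact hz ha
          · intro a ha b hb1 hb2 hb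
            simp only [List.mem_append, List.mem_reverse, List.mem_singleton, not_or] at hb
            exact absurd (mem_drop_of h hnd hb1 (by omega)) hb.1
    rw [this, card_pair (by omega)]
  · have : GLp (n+1) (z.reverse ++ (n+1) :: (y.reverse ++ [n+1])) = {0} := by
      ext i
      rw [mem_singleton]
      constructor
      · intro hi
        by_contra hi0
        exact hzn (key i hi hi0).1
      · rintro rfl; exact h0
    rw [this, card_singleton]

lemma spc_lch {n : ℕ} {w : List ℕ} {j : ℕ} (h : IsMultisetPerm n w) (hj : j ∈ GLp n w) :
    Spc (lch (n+1) w j) ↔ (w.drop j).Nodup := by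
  have hM : n + 1 ∉ w := by rw [perm_mem h]; omega
  have hy : n+1 ∉ w.take j := fun h => hM (List.mem_of_mem_take h)
  have hz : n+1 ∉ w.drop j := fun h => hM (List.mem_of_mem_drop h)
  obtain ⟨hjl, hnd, hg⟩ := mem_GLp.1 hj
  have hlen : (lch (n+1) w j).length = w.length + 2 := by simp [lch]; omega
  have e : lch (n+1) w j = ((n+1) :: w.take j) ++ ((n+1) :: w.drop j) := rfl
  have el : ((n+1) :: w.take j).length = j + 1 := by simp; omega
  have et : (lch (n+1) w j).take (j+1) = (n+1) :: w.take j := by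
    rw [e, ← el, List.take_left]
  have ed : (lch (n+1) w j).drop (j+1) = (n+1) :: w.drop j := by
    rw [e, ← el, List.drop_left]
  constructor
  · rintro ⟨i, hi, h1, h2⟩
    have hij : i ≤ j + 1 := by
      by_contra hc
      have hs : ((lch (n+1) w j).take (j+2)).Sublist ((lch (n+1) w j).take i) :=
        (List.take_prefix_take_left (by omega)).sublist
      have h3 := hs.nodup h1
      have e2 : (lch (n+1) w j).take (j+2) = ((n+1) :: w.take j) ++ [n+1] := by
        rw [e, show j + 2 = ((n+1) :: w.take j).length + 1 by rw [el], List.take_length_add_append]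
        rfl
      rw [e2, List.nodup_append] at h3
      exact h3.2.2 (n+1) (by simp) (n+1) (by simp) rfl
    have hs : ((lch (n+1) w j).drop (j+1)).Sublist ((lch (n+1) w j).drop i) :=
      (List.drop_suffix_drop_left _ hij).sublist
    have h3 := hs.nodup h2
    rw [ed] at h3
    exact (List.nodup_cons.1 h3).2
  · intro hd
    refine ⟨j+1, by omega, ?_, ?_⟩
    · rw [et]; exact List.nodup_cons.2 ⟨hy, hnd⟩
    · rw [ed]; exact List.nodup_cons.2 ⟨hz, hd⟩

lemma rank_sum (S : Finset ℕ) (F : ℕ → ℤ) :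
    ∑ j ∈ S, F (S.filter (· ≤ j)).card = ∑ i ∈ range S.card, F (i+1) := by
  induction S using Finset.induction_on_max with
  | empty => simp
  | insert a s hs ih =>
    have ha : a ∉ s := fun h => lt_irrefl _ (hs a h)
    rw [sum_insert ha, card_insert_of_notMem ha, sum_range_succ, ← ih, add_comm]
    congr 1
    · apply sum_congr rfl
      intro j hj
      have := hs j hj
      rw [filter_insert, if_neg (by omega)]
    · congr 1
      rw [filter_true_of_mem, card_insert_of_notMem ha]
      intro x hx
      rcases mem_insert.1 hx with rfl | hx
      · exact le_rfl
      · exact (hs x hx).le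

/-- Special position is the maximal one. -/
lemma spc_pos {n : ℕ} {w : List ℕ} (h : IsMultisetPerm n w) (hs : Spc w) :
    ∃ j ∈ GLp n w, (∀ i ∈ GLp n w, i ≤ j) ∧ ∀ i ∈ GLp n w, ((w.drop i).Nodup ↔ i = j) := by
  have hmax : ∀ j ∈ GLp n w, (w.drop j).Nodup → ∀ i ∈ GLp n w, i ≤ j := by
    intro j hj hd i hi
    by_contra hc
    obtain ⟨hil, hin, hig⟩ := mem_GLp.1 hi
    have hlt : j < w.length := by omega
    have hb := (perm_mem h w[j]).1 (List.getElem_mem hlt)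
    have h1 := mem_take_of h hd hb.1 hb.2
    have h2 : List.Sublist (w.take j ++ [w[j]]) (w.take i) := by
      rw [List.take_append_getElem]
      exact (List.take_prefix_take_left (by omega)).sublist
    have h3 := h2.nodup hin
    rw [List.nodup_append] at h3
    exact h3.2.2 _ h1 _ (by simp) rfl
  obtain ⟨j, hj, h1, h2⟩ := hs
  have hj' : j ∈ GLp n w :=
    mem_GLp.2 ⟨hj, h1, fun a ha b hb1 hb2 hb => absurd (mem_take_of h h2 hb1 hb2) hb⟩
  refine ⟨j, hj', hmax j hj' h2, fun i hi => ⟨fun hd => ?_, ?_⟩⟩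
  · exact le_antisymm (hmax j hj' h2 i hi) (hmax i hi hd j hj')
  · rintro rfl; exact h2

/-- Number of descendants of an ordinary node with `r` children. -/
def fz (k r : ℕ) : ℤ := (Nat.choose (2 * k + r - 2) k : ℤ)

/-- Number of descendants of a special node with `r` children. -/
def gz (k r : ℕ) : ℤ := (Nat.choose (2 * k + r - 3) k : ℤ) + (Nat.choose (2 * k + 1) k : ℤ) - 2 ^ k

lemma sum_fz (k L : ℕ) :
    ∑ i ∈ range L, fz k (i+3) = (Nat.choose (2*k+L+1) (k+1) : ℤ) - Nat.choose (2*k+1) (k+1) := by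
  induction L with
  | zero => simp
  | succ L ih =>
    rw [sum_range_succ, ih, fz, show 2*k+(L+3)-2 = 2*k+L+1 by omega,
      show 2*k+(L+1)+1 = (2*k+L+1)+1 by ring, Nat.choose_succ_succ (2*k+L+1) k]
    push_cast; ring

lemma choose_half (k : ℕ) : Nat.choose (2*k+1) (k+1) = Nat.choose (2*k+1) k :=
  Nat.choose_symm_half k

lemma fz_succ (k L : ℕ) :
    ∑ i ∈ range L, fz k (i+3) + ∑ i ∈ range 1, fz k (i+3) = fz (k+1) (L+1) := by
  rw [sum_fz, sum_fz, choose_half, fz, show 2*(k+1)+(L+1)-2 = 2*k+L+1 by omega,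
    show 2*k+1+1 = (2*k+1)+1 by ring, Nat.choose_succ_succ (2*k+1) k, choose_half]
  push_cast; ring

lemma gz_succ (k L : ℕ) :
    (∑ i ∈ range (L+1), fz k (i+3) + gz k (L+2+3)) + (∑ i ∈ range 1, fz k (i+3) + gz k 5)
      = gz (k+1) (L+2+2) := by
  rw [sum_fz, sum_fz, choose_half, gz, gz, gz, show 2*(k+1)+(L+2+2)-3 = (2*k+L+2)+1 by omega,
    show 2*(k+1)+1 = (2*k+1+1)+1 by ring, show 2*k+(L+2+3)-3 = 2*k+L+2 by omega,
    show 2*k+5-3 = (2*k+1)+1 by omega, show 2*k+(L+1)+1 = 2*k+L+2 by ring,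
    Nat.choose_succ_succ (2*k+L+2) k, Nat.choose_succ_succ (2*k+1+1) k,
    Nat.choose_succ_succ (2*k+1) k, choose_half, pow_succ]
  push_cast; ring

open Classical in
/-- Predicted number of descendants at depth `k`. -/
noncomputable def vz (n k : ℕ) (w : List ℕ) : ℤ :=
  if Spc w then gz k ((GLp n w).card + (GLp n w.reverse).card)
  else fz k ((GLp n w).card + (GLp n w.reverse).card)

lemma vz_rev (n k : ℕ) (w : List ℕ) : vz n k w.reverse = vz n k w := by
  unfold vz
  rw [List.reverse_reverse, add_comm]
  by_cases h : Spc w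
  · rw [if_pos h, if_pos (spc_rev.2 h)]
  · rw [if_neg h, if_neg (fun h' => h (spc_rev.1 h'))]

lemma left_ord {n k : ℕ} {w : List ℕ} (h : IsMultisetPerm n w) (hs : ¬ Spc w) :
    ∑ j ∈ GLp n w, vz (n+1) k (lch (n+1) w j) = ∑ i ∈ range (GLp n w).card, fz k (i+3) := by
  rw [← rank_sum (GLp n w) (fun i => fz k (i+2))]
  apply sum_congr rfl
  intro j hj
  have hd : ¬ (w.drop j).Nodup := fun hd => hs ⟨j, (mem_GLp.1 hj).1, (mem_GLp.1 hj).2.1, hd⟩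
  unfold vz
  rw [if_neg (by rwa [spc_lch h hj]), card_left h hj, card_right h hj, if_neg hd]

lemma left_spc {n k : ℕ} {w : List ℕ} (h : IsMultisetPerm n w) (hs : Spc w) :
    ∑ j ∈ GLp n w, vz (n+1) k (lch (n+1) w j)
      = ∑ i ∈ range ((GLp n w).card - 1), fz k (i+3) + gz k ((GLp n w).card + 3) := by
  obtain ⟨m, hm, hmax, hd⟩ := spc_pos h hs
  have hc : 0 < (GLp n w).card := card_pos.2 ⟨m, hm⟩
  have hall : (GLp n w).filter (· ≤ m) = GLp n w := filter_true_of_mem hmax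
  have hr := rank_sum (GLp n w) (fun i => fz k (i+2))
  obtain ⟨c, hcc⟩ : ∃ c, (GLp n w).card = c + 1 := ⟨(GLp n w).card - 1, by omega⟩
  rw [← add_sum_erase _ _ hm] at hr ⊢
  rw [hall, hcc, sum_range_succ] at hr
  have h1 : vz (n+1) k (lch (n+1) w m) = gz k ((GLp n w).card + 3) := by
    have hdm := (hd m hm).2 rfl
    unfold vz
    rw [if_pos (by rwa [spc_lch h hm]), card_left h hm, card_right h hm, if_pos hdm, hall]
  have h2 : ∑ j ∈ (GLp n w).erase m, vz (n+1) k (lch (n+1) w j)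
      = ∑ j ∈ (GLp n w).erase m, fz k (((GLp n w).filter (· ≤ j)).card + 2) := by
    apply sum_congr rfl
    intro j hj
    obtain ⟨hne, hj⟩ := mem_erase.1 hj
    have hdj : ¬ (w.drop j).Nodup := fun h => hne ((hd j hj).1 h)
    unfold vz
    rw [if_neg (by rwa [spc_lch h hj]), card_left h hj, card_right h hj, if_neg hdj]
  rw [h1, h2, hcc]
  simp only [Nat.add_sub_cancel]
  have e : ∀ i, i + 1 + 2 = i + 3 := fun i => rfl
  simp only [e] at hr
  linarith

/-- The invariant describing the possible states. -/
def Sts (n : ℕ) (w : List ℕ) : Prop :=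
  (¬ Spc w → (1 ≤ (GLp n w).card ∧ (GLp n w.reverse).card = 1) ∨
    ((GLp n w).card = 1 ∧ 1 ≤ (GLp n w.reverse).card)) ∧
  (Spc w → (2 ≤ (GLp n w).card ∧ (GLp n w.reverse).card = 2) ∨
    ((GLp n w).card = 2 ∧ 2 ≤ (GLp n w.reverse).card))

lemma sts_rev {n : ℕ} {w : List ℕ} (h : Sts n w) : Sts n w.reverse := by
  unfold Sts at *
  rw [spc_rev, List.reverse_reverse]
  tauto

lemma sts_lch {n : ℕ} {w : List ℕ} {j : ℕ} (h : IsMultisetPerm n w) (hj : j ∈ GLp n w) :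
    Sts (n+1) (lch (n+1) w j) := by
  have hc : 0 < ((GLp n w).filter (· ≤ j)).card := card_pos.2 ⟨j, by simp [hj]⟩
  unfold Sts
  rw [spc_lch h hj, card_left h hj, card_right h hj]
  constructor
  · intro hd; rw [if_neg hd]; left; omega
  · intro hd; rw [if_pos hd]; left; omega

lemma GLp_one : (GLp 1 [1,1]).card = 2 := by
  have : GLp 1 [1,1] = {0, 1} := by
    ext i
    rw [mem_GLp, mem_insert, mem_singleton]
    constructor
    · rintro ⟨h1, h2, -⟩
      simp at h1
      interval_cases i
      · simp
      · simp
      · simp at h2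
    · rintro (rfl | rfl)
      · simp [good_nil]
      · refine ⟨by simp, by simp, ?_⟩
        intro a ha b hb1 hb2 hb
        simp at hb
        omega
  rw [this]; rfl

lemma spc_one : Spc [1,1] := ⟨1, by simp, by simp, by simp⟩

lemma sts_lev (m : ℕ) (w : List ℕ) (hw : w ∈ lev m) : Sts (m+1) w := by
  cases m with
  | zero =>
    simp only [lev, mem_singleton] at hw
    subst hw
    refine ⟨fun h => absurd spc_one h, fun _ => ?_⟩
    have : ([1,1] : List ℕ).reverse = [1,1] := rfl
    rw [this, zero_add, GLp_one]; omega
  | succ m =>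
    simp only [lev, mem_biUnion] at hw
    obtain ⟨u, hu, hv⟩ := hw
    have hp := ((mem_lev m u).1 hu).1
    simp only [chil, mem_union, mem_image] at hv
    rcases hv with ⟨j, hj, rfl⟩ | ⟨j, hj, rfl⟩
    · exact sts_lch hp hj
    · exact sts_rev (sts_lch (perm_rev hp) hj)

lemma local_rec {n k : ℕ} (hn : 1 ≤ n) {w : List ℕ} (h : IsMultisetPerm n w) (hs : Sts n w) :
    ∑ v ∈ chil n w, vz (n+1) k v = vz n (k+1) w := by
  rw [sum_chil hn h]
  simp only [vz_rev]
  by_cases hp : Spc w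
  · rw [left_spc h hp, left_spc (perm_rev h) (spc_rev' hp), vz, if_pos hp]
    rcases hs.2 hp with ⟨h1, h2⟩ | ⟨h1, h2⟩
    · obtain ⟨c, hc⟩ := Nat.exists_eq_add_of_le' h1
      rw [h2, hc, ← gz_succ]; rfl
    · obtain ⟨c, hc⟩ := Nat.exists_eq_add_of_le' h2
      rw [h1, hc, add_comm 2 (c + 2), ← gz_succ, add_comm]; rfl
  · rw [left_ord h hp, left_ord (perm_rev h) (by rwa [spc_rev]), vz, if_neg hp]
    rcases hs.1 hp with ⟨h1, h2⟩ | ⟨h1, h2⟩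
    · rw [h2, fz_succ]
    · rw [h1, add_comm 1, ← fz_succ, add_comm]

lemma vz_zero (n : ℕ) (w : List ℕ) : vz n 0 w = 1 := by
  unfold vz fz gz; split_ifs <;> simp

lemma sum_vz (m k : ℕ) : ∑ w ∈ lev m, vz (m+1) k w = gz (k+m) 4 := by
  induction m generalizing k with
  | zero =>
    simp only [lev, sum_singleton]
    have : ([1,1] : List ℕ).reverse = [1,1] := rfl
    rw [vz, if_pos spc_one, this, zero_add, GLp_one, add_zero]
  | succ m ih =>
    rw [sum_lev_succ, show k + (m+1) = (k+1) + m by ring, ← ih]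
    exact sum_congr rfl fun w hw => local_rec (by omega) ((mem_lev m w).1 hw).1 (sts_lev m w hw)

theorem nonnesting_avoid_1322_2231 (n : ℕ) (hn : 1 ≤ n) :
    {w : List ℕ | IsNonnesting n w ∧
      Avoids w [1,3,2,2] ∧ Avoids w [2,2,3,1]}.ncard =
      Nat.choose (2 * n) n - 2 ^ (n - 1) := by
  obtain ⟨m, rfl⟩ : ∃ m, n = m + 1 := ⟨n - 1, by omega⟩
  have hset : {w : List ℕ | IsNonnesting (m+1) w ∧
      Avoids w [1,3,2,2] ∧ Avoids w [2,2,3,1]} = (lev m : Set (List ℕ)) := by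
    ext w
    rw [Set.mem_ofPred_eq, ncls_iff, mem_coe, mem_lev]
  rw [hset, Set.ncard_coe_finset]
  have h1 := sum_vz m 0
  simp only [vz_zero, sum_const, nsmul_eq_mul, mul_one, zero_add] at h1
  have h2 : ((lev m).card : ℤ) + 2 ^ m = Nat.choose (2 * (m+1)) (m+1) := by
    rw [h1, gz, show 2 * m + 4 - 3 = 2 * m + 1 by omega, show 2 * (m+1) = (2*m+1)+1 by ring,
      Nat.choose_succ_succ (2*m+1) m, choose_half]
    push_cast; ring
  have h3 : (lev m).card + 2 ^ m = Nat.choose (2 * (m+1)) (m+1) := by exact_mod_cast h2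
  rw [Nat.add_sub_cancel]
  omega
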